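/- For any game G, any subset X of vertices, any valuation val ∈ {MP, supΣ^X, infΣ^X}, and any vertex v, it holds that inf_σ sup_{π ⊨ σ, π from v} val(π) = sup_τ inf_{π ⊨ τ, π from v} val(π), where σ ranges over positional Min-strategies, τ over positional Max-strategies, and π over infinite paths starting from v (positional determinacy for mean-payoff and energy-type valuations). -/

import Mathlib

/-!
Basic definitions for mean-payoff games: games, infinite paths, positional
strategies, the valuations MP, supΣ^X and infΣ^X, values of vertices,
zones N, P, ZN, ZP (also relative to a sub-arena), reduced games,
potentials and potential reductions, traps.
-/

/-- A game: a sinkless directed graph with integer weights, whose vertices are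
partitioned into Min-vertices (`IsMin`) and Max-vertices (`¬ IsMin`). -/
structure MPGame (V : Type*) where
  E : V → V → Prop
  w : V → V → ℤ
  IsMin : V → Prop
  sinkless : ∀ v, ∃ v', E v v'

namespace MPGame

variable {V : Type*}

/-- An infinite path in a game. -/
structure Path (G : MPGame V) where
  vert : ℕ → V
  adj : ∀ i, G.E (vert i) (vert (i + 1))

/-- The sum of the weights of the first `k` edges of a path. -/
def Path.wsum {G : MPGame V} (π : G.Path) (k : ℕ) : ℤ :=
  ∑ i ∈ Finset.range k, G.w (π.vert i) (π.vert (i + 1))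

/-- The tail of a path (drop the first vertex). -/
def Path.tail {G : MPGame V} (π : G.Path) : G.Path :=
  ⟨fun i => π.vert (i + 1), fun i => π.adj (i + 1)⟩

/-- A positional strategy `σ : V → V` is legal if it always follows an edge. -/
def Legal (G : MPGame V) (σ : V → V) : Prop := ∀ v, G.E v (σ v)

/-- Consistency of a path with a positional Min-strategy. -/
def Path.ConsMin {G : MPGame V} (π : G.Path) (σ : V → V) : Prop :=
  ∀ i, G.IsMin (π.vert i) → π.vert (i + 1) = σ (π.vert i)

/-- Consistency of a path with a positional Max-strategy. -/
def Path.ConsMax {G : MPGame V} (π : G.Path) (τ : V → V) : Prop :=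
  ∀ i, ¬ G.IsMin (π.vert i) → π.vert (i + 1) = τ (π.vert i)

/-- The mean-payoff valuation `MP(π) = limsup_k (1/k) ∑_{i<k} w_i`. -/
noncomputable def MP {G : MPGame V} (π : G.Path) : EReal :=
  Filter.limsup (fun k => (((π.wsum k : ℝ) / (k : ℝ)) : EReal)) Filter.atTop

/-- `supΣ^X(π) = sup_{k ≤ n_X} ∑_{i<k} w_i`, where `n_X` is the first hitting
time of `X` (all `k` if `X` is never hit). -/
noncomputable def supSigma {G : MPGame V} (X : Set V) (π : G.Path) : EReal :=
  ⨆ k : {k : ℕ // ∀ i < k, π.vert i ∉ X}, ((π.wsum k.1 : ℝ) : EReal)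

/-- `infΣ^X(π) = inf_{k ≤ n_X} ∑_{i<k} w_i`. -/
noncomputable def infSigma {G : MPGame V} (X : Set V) (π : G.Path) : EReal :=
  ⨅ k : {k : ℕ // ∀ i < k, π.vert i ∉ X}, ((π.wsum k.1 : ℝ) : EReal)

/-- `inf_σ sup_{π ⊨ σ, π from v} val(π)`, over legal positional Min-strategies. -/
noncomputable def minVal (G : MPGame V) (val : G.Path → EReal) (v : V) : EReal :=
  ⨅ σ : {σ : V → V // G.Legal σ},
    ⨆ π : {π : G.Path // π.vert 0 = v ∧ π.ConsMin σ.1}, val π.1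

/-- `sup_τ inf_{π ⊨ τ, π from v} val(π)`, over legal positional Max-strategies. -/
noncomputable def maxVal (G : MPGame V) (val : G.Path → EReal) (v : V) : EReal :=
  ⨆ τ : {τ : V → V // G.Legal τ},
    ⨅ π : {π : G.Path // π.vert 0 = v ∧ π.ConsMax τ.1}, val π.1

/-- The MP-value of a vertex. -/
noncomputable def MPval (G : MPGame V) (v : V) : EReal := G.minVal MP v

/-- The `supΣ^X`-value of a vertex. -/
noncomputable def supSigmaVal (G : MPGame V) (X : Set V) (v : V) : EReal :=
  G.minVal (supSigma X) v

/-- The `infΣ^X`-value of a vertex. -/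
noncomputable def infSigmaVal (G : MPGame V) (X : Set V) (v : V) : EReal :=
  G.minVal (infSigma X) v

/-- `G` has no cycle of total weight zero: no path repeats a vertex with the
same partial sum of weights. -/
def NoZeroCycle (G : MPGame V) : Prop :=
  ∀ (π : G.Path) (i j : ℕ), i < j → π.vert i = π.vert j → π.wsum i ≠ π.wsum j

/-- The zone `N` of the subgame of `G` induced on `D`: vertices whose
immediately optimal edges (within `D`) have weight `< 0`. -/
def NsetOn (G : MPGame V) (D : Set V) : Set V :=
  {v | v ∈ D ∧ ((G.IsMin v ∧ ∃ v' ∈ D, G.E v v' ∧ G.w v v' < 0) ∨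
      (¬ G.IsMin v ∧ ∀ v' ∈ D, G.E v v' → G.w v v' < 0))}

/-- The zone `P` of the subgame of `G` induced on `D`. -/
def PsetOn (G : MPGame V) (D : Set V) : Set V :=
  {v | v ∈ D ∧ ((¬ G.IsMin v ∧ ∃ v' ∈ D, G.E v v' ∧ 0 < G.w v v') ∨
      (G.IsMin v ∧ ∀ v' ∈ D, G.E v v' → 0 < G.w v v'))}

/-- The zone `N` of `G`. -/
def Nset (G : MPGame V) : Set V := G.NsetOn Set.univ

/-- The zone `P` of `G`. -/
def Pset (G : MPGame V) : Set V := G.PsetOn Set.univ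

/-- The zone `ZN` of the subgame of `G` induced on `D`: vertices from which
Min can force that an edge of weight `< 0` is visited before any edge of
weight `> 0` (staying within `D`). -/
inductive ZNr (G : MPGame V) (D : Set V) : V → Prop
  | minNeg (v v' : V) : v ∈ D → G.IsMin v → v' ∈ D → G.E v v' → G.w v v' < 0 →
      ZNr G D v
  | minZero (v v' : V) : v ∈ D → G.IsMin v → v' ∈ D → G.E v v' → G.w v v' = 0 →
      ZNr G D v' → ZNr G D v
  | max (v : V) : v ∈ D → ¬ G.IsMin v →
      (∀ v' ∈ D, G.E v v' → G.w v v' ≤ 0) →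
      (∀ v', v' ∈ D → G.E v v' → G.w v v' = 0 → ZNr G D v') →
      ZNr G D v

/-- The zone `ZP` of the subgame of `G` induced on `D`. -/
inductive ZPr (G : MPGame V) (D : Set V) : V → Prop
  | maxPos (v v' : V) : v ∈ D → ¬ G.IsMin v → v' ∈ D → G.E v v' → 0 < G.w v v' →
      ZPr G D v
  | maxZero (v v' : V) : v ∈ D → ¬ G.IsMin v → v' ∈ D → G.E v v' → G.w v v' = 0 →
      ZPr G D v' → ZPr G D v
  | min (v : V) : v ∈ D → G.IsMin v →
      (∀ v' ∈ D, G.E v v' → 0 ≤ G.w v v') →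
      (∀ v', v' ∈ D → G.E v v' → G.w v v' = 0 → ZPr G D v') →
      ZPr G D v

/-- The zone `ZN` of `G`. -/
def ZN (G : MPGame V) : V → Prop := G.ZNr Set.univ

/-- The zone `ZP` of `G`. -/
def ZP (G : MPGame V) : V → Prop := G.ZPr Set.univ

/-- The subgame of `G` induced on `D` is reduced: from every vertex of `ZN`,
Min can force that the first edge visited has weight `≤ 0` and leads into
`ZN`, and symmetrically for `ZP` and Max. -/
def ReducedOn (G : MPGame V) (D : Set V) : Prop :=
  (∀ v, G.ZNr D v →
     (G.IsMin v → ∃ v' ∈ D, G.E v v' ∧ G.w v v' ≤ 0 ∧ G.ZNr D v') ∧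
     (¬ G.IsMin v → ∀ v' ∈ D, G.E v v' → G.w v v' ≤ 0 ∧ G.ZNr D v')) ∧
  (∀ v, G.ZPr D v →
     (¬ G.IsMin v → ∃ v' ∈ D, G.E v v' ∧ 0 ≤ G.w v v' ∧ G.ZPr D v') ∧
     (G.IsMin v → ∀ v' ∈ D, G.E v v' → 0 ≤ G.w v v' ∧ G.ZPr D v'))

/-- `G` is reduced. -/
def Reduced (G : MPGame V) : Prop := G.ReducedOn Set.univ

/-- The subgame of `G` induced on `D` is positively reduced: `ZN = ∅`. -/
def PosReducedOn (G : MPGame V) (D : Set V) : Prop := ∀ v, ¬ G.ZNr D v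

/-- `A` is a trap for Min: a sinkless subgraph from which Min cannot escape. -/
def TrapForMin (G : MPGame V) (A : Set V) : Prop :=
  (∀ v ∈ A, ∃ v' ∈ A, G.E v v') ∧
  ∀ v ∈ A, G.IsMin v → ∀ v', G.E v v' → v' ∈ A

/-- `A` is a trap for Max: a sinkless subgraph from which Max cannot escape. -/
def TrapForMax (G : MPGame V) (A : Set V) : Prop :=
  (∀ v ∈ A, ∃ v' ∈ A, G.E v v') ∧
  ∀ v ∈ A, ¬ G.IsMin v → ∀ v', G.E v v' → v' ∈ A

/-- The potential reduction of `G` by the potential `φ`. -/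
def pot (G : MPGame V) (φ : V → ℤ) : MPGame V where
  E := G.E
  w := fun v v' => G.w v v' + φ v' - φ v
  IsMin := G.IsMin
  sinkless := G.sinkless

end MPGame

namespace MPGame

variable {V : Type*}

/-- The play from `v` in which Min follows `σ` and Max follows `τ`. -/
theorem exists_path_consMin_consMax (G : MPGame V) {σ τ : V → V} (hσ : G.Legal σ)
    (hτ : G.Legal τ) (v : V) : ∃ π : G.Path, π.vert 0 = v ∧ π.ConsMin σ ∧ π.ConsMax τ := by
  classical
  let next : V → V := fun u => if G.IsMin u then σ u else τ u
  have hsucc (i : ℕ) : next^[i + 1] v = next (next^[i] v) := Function.iterate_succ_apply' ..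
  refine ⟨⟨fun i => next^[i] v, fun i => ?_⟩, rfl, fun i hi => ?_, fun i hi => ?_⟩
  · rw [hsucc]
    by_cases h : G.IsMin (next^[i] v)
    · simpa [next, h] using hσ _
    · simpa [next, h] using hτ _
  · exact (hsucc i).trans (if_pos hi)
  · exact (hsucc i).trans (if_neg hi)

theorem maxVal_le_minVal (G : MPGame V) (val : G.Path → EReal) (v : V) :
    G.maxVal val v ≤ G.minVal val v := by
  refine iSup_le fun τ => le_iInf fun σ => ?_
  obtain ⟨π, h0, hσ, hτ⟩ := G.exists_path_consMin_consMax σ.2 τ.2 v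
  exact (iInf_le (fun π : {π : G.Path // π.vert 0 = v ∧ π.ConsMax τ.1} => val π.1)
    ⟨π, h0, hτ⟩).trans
    (le_iSup (fun π : {π : G.Path // π.vert 0 = v ∧ π.ConsMin σ.1} => val π.1) ⟨π, h0, hσ⟩)

instance (G : MPGame V) : Nonempty {σ : V → V // G.Legal σ} := by
  choose f hf using G.sinkless
  exact ⟨⟨f, hf⟩⟩

instance (G : MPGame V) (v : V) : Nonempty {v' // G.E v v'} :=
  let ⟨v', h⟩ := G.sinkless v
  ⟨⟨v', h⟩⟩

theorem Path.wsum_succ {G : MPGame V} (π : G.Path) (k : ℕ) :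
    π.wsum (k + 1) = π.wsum k + G.w (π.vert k) (π.vert (k + 1)) :=
  Finset.sum_range_succ _ _

open Classical in
/-- The value of the `supΣ^X`-game truncated after `i` steps. -/
noncomputable def supApprox (G : MPGame V) (X : Set V) : ℕ → V → ℤ
  | 0, _ => 0
  | i + 1, v =>
    if v ∈ X then 0
    else max 0 (if G.IsMin v then ⨅ u : {u // G.E v u}, (G.w v u + supApprox G X i u)
      else ⨆ u : {u // G.E v u}, (G.w v u + supApprox G X i u))

section supApprox

variable (G : MPGame V) {X : Set V}

theorem supApprox_nonneg (i : ℕ) (v : V) : 0 ≤ G.supApprox X i v := by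
  cases i with
  | zero => exact le_rfl
  | succ i =>
    rw [supApprox]
    split_ifs <;> simp

theorem supApprox_of_mem {v : V} (hv : v ∈ X) (i : ℕ) : G.supApprox X i v = 0 := by
  cases i with
  | zero => rfl
  | succ i => rw [supApprox, if_pos hv]

variable [Finite V]

theorem exists_add_supApprox_le {v : V} (hX : v ∉ X) (hv : G.IsMin v) (i : ℕ) :
    ∃ u, G.E v u ∧ G.w v u + G.supApprox X i u ≤ G.supApprox X (i + 1) v := by
  obtain ⟨u, hu⟩ := exists_eq_ciInf_of_finite
    (f := fun u : {u // G.E v u} => G.w v u + G.supApprox X i u)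
  refine ⟨u, u.2, ?_⟩
  rw [supApprox, if_neg hX, if_pos hv, ← hu]
  exact le_max_right _ _

theorem add_supApprox_le {v u : V} (hX : v ∉ X) (hv : ¬ G.IsMin v) (hu : G.E v u) (i : ℕ) :
    G.w v u + G.supApprox X i u ≤ G.supApprox X (i + 1) v := by
  rw [supApprox, if_neg hX, if_neg hv]
  exact (le_ciSup (f := fun u : {u // G.E v u} => G.w v u + G.supApprox X i u)
    (Set.finite_range _).bddAbove ⟨u, hu⟩).trans (le_max_right _ _)

theorem supApprox_succ_le {v u : V} (hv : G.IsMin v) (hu : G.E v u) {i : ℕ}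
    (hpos : 0 < G.supApprox X (i + 1) v) :
    G.supApprox X (i + 1) v ≤ G.w v u + G.supApprox X i u := by
  have hX : v ∉ X := fun h => by simp [G.supApprox_of_mem h] at hpos
  have hle := ciInf_le (f := fun u : {u // G.E v u} => G.w v u + G.supApprox X i u)
    (Set.finite_range _).bddBelow ⟨u, hu⟩
  rw [supApprox, if_neg hX, if_pos hv] at hpos ⊢
  exact (max_le_iff.2 ⟨((lt_max_iff.1 hpos).resolve_left (lt_irrefl _)).le, le_rfl⟩).trans hle

theorem exists_supApprox_succ_le {v : V} (hv : ¬ G.IsMin v) {i : ℕ}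
    (hpos : 0 < G.supApprox X (i + 1) v) :
    ∃ u, G.E v u ∧ G.supApprox X (i + 1) v ≤ G.w v u + G.supApprox X i u := by
  have hX : v ∉ X := fun h => by simp [G.supApprox_of_mem h] at hpos
  obtain ⟨u, hu⟩ := exists_eq_ciSup_of_finite
    (f := fun u : {u // G.E v u} => G.w v u + G.supApprox X i u)
  refine ⟨u, u.2, ?_⟩
  rw [supApprox, if_neg hX, if_neg hv, ← hu] at hpos ⊢
  exact max_le_iff.2 ⟨((lt_max_iff.1 hpos).resolve_left (lt_irrefl _)).le, le_rfl⟩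

theorem supApprox_le_succ (i : ℕ) (v : V) : G.supApprox X i v ≤ G.supApprox X (i + 1) v := by
  induction i generalizing v with
  | zero => exact G.supApprox_nonneg _ _
  | succ i ih =>
    rcases (G.supApprox_nonneg (X := X) (i + 1) v).eq_or_lt with h0 | hpos
    · rw [← h0]
      exact G.supApprox_nonneg _ _
    have hX : v ∉ X := fun h => by simp [G.supApprox_of_mem h] at hpos
    by_cases hv : G.IsMin v
    · obtain ⟨u, hu, hle⟩ := G.exists_add_supApprox_le hX hv (i + 1)
      linarith [G.supApprox_succ_le hv hu hpos, ih u]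
    · obtain ⟨u, hu, hle⟩ := G.exists_supApprox_succ_le hv hpos
      linarith [G.add_supApprox_le hX hv hu (i + 1), ih u]

theorem supApprox_mono (v : V) : Monotone fun i => G.supApprox X i v :=
  monotone_nat_of_le_succ fun i => G.supApprox_le_succ i v

/-- A positive value `supApprox X N v` is already attained at some stage `r v ≤ N`, where Max can
secure it using the values of an earlier stage. -/
theorem exists_strategy_supApprox_le (X : Set V) (N : ℕ) :
    ∃ (τ : V → V) (r : V → ℕ), G.Legal τ ∧ (∀ v, r v ≤ N) ∧
      ∀ v u, G.E v u → (¬ G.IsMin v → u = τ v) → 0 < G.supApprox X N v →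
        G.supApprox X N v + 1 ≤ G.w v u + G.supApprox X N u ∨
          G.supApprox X N v ≤ G.w v u + G.supApprox X N u ∧ r u < r v := by
  classical
  have hex (v : V) : ∃ i, G.supApprox X i v = G.supApprox X N v := ⟨N, rfl⟩
  let r : V → ℕ := fun v => Nat.find (hex v)
  have hr (v : V) : r v ≤ N := Nat.find_min' (hex v) rfl
  have hstage (v : V) (hpos : 0 < G.supApprox X N v) :
      ∃ j, r v = j + 1 ∧ G.supApprox X N v = G.supApprox X (j + 1) v := by
    have hspec : G.supApprox X (r v) v = G.supApprox X N v := Nat.find_spec (hex v)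
    cases hrv : r v with
    | zero =>
      rw [hrv] at hspec
      exact absurd (hspec.symm.trans rfl) hpos.ne'
    | succ j => exact ⟨j, rfl, by rw [← hspec, hrv]⟩
  have hτ (v : V) : ∃ u, G.E v u ∧ (¬ G.IsMin v → 0 < G.supApprox X N v →
      ∀ j, r v = j + 1 → G.supApprox X N v ≤ G.w v u + G.supApprox X j u) := by
    by_cases h : ¬ G.IsMin v ∧ 0 < G.supApprox X N v
    · obtain ⟨j, hj, heq⟩ := hstage v h.2
      obtain ⟨u, hu, hle⟩ := G.exists_supApprox_succ_le h.1 (heq ▸ h.2)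
      refine ⟨u, hu, fun _ _ i hi => ?_⟩
      obtain rfl : i = j := by omega
      exact heq.trans_le hle
    · obtain ⟨u, hu⟩ := G.sinkless v
      exact ⟨u, hu, fun h1 h2 => absurd ⟨h1, h2⟩ h⟩
  choose τ hlegal hτ using hτ
  refine ⟨τ, r, hlegal, hr, fun v u hu hcons hpos => ?_⟩
  obtain ⟨j, hj, heq⟩ := hstage v hpos
  have hle : G.supApprox X N v ≤ G.w v u + G.supApprox X j u := by
    by_cases hv : G.IsMin v
    · exact heq.trans_le (G.supApprox_succ_le hv hu (heq ▸ hpos))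
    · rw [hcons hv]
      exact hτ v hv hpos j hj
  have hjN : j ≤ N := by have := hr v; omega
  have hmono : G.supApprox X j u ≤ G.supApprox X N u := G.supApprox_mono u hjN
  rcases hmono.eq_or_lt with h | h
  · refine .inr ⟨by rwa [← h], ?_⟩
    have : r u ≤ j := Nat.find_min' (hex u) h
    omega
  · left
    linarith

theorem exists_strategy_supApprox_le_supSigma (X : Set V) (N : ℕ) :
    ∃ τ, G.Legal τ ∧ ∀ π : G.Path, π.ConsMax τ →
      (((G.supApprox X N (π.vert 0) : ℤ) : ℝ) : EReal) ≤ supSigma X π := by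
  obtain ⟨τ, r, hlegal, hr, hstep⟩ := G.exists_strategy_supApprox_le X N
  refine ⟨τ, hlegal, fun π hπ => ?_⟩
  by_contra! hlt
  set f := G.supApprox X N with hf
  have hsum (k : ℕ) (hk : ∀ i < k, π.vert i ∉ X) : π.wsum k < f (π.vert 0) := by
    have h := (le_iSup (fun k : {k : ℕ // ∀ i < k, π.vert i ∉ X} =>
      ((π.wsum k.1 : ℝ) : EReal)) ⟨k, hk⟩).trans_lt hlt
    exact_mod_cast h
  have hstep' (k : ℕ) := hstep (π.vert k) (π.vert (k + 1)) (π.adj k) (hπ k)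
  have hinv (k : ℕ) : (∀ i < k, π.vert i ∉ X) ∧ f (π.vert 0) ≤ π.wsum k + f (π.vert k) ∧
      (k : ℤ) - N ≤ (N + 1) * (π.wsum k + f (π.vert k) - f (π.vert 0)) - r (π.vert k) := by
    induction k with
    | zero =>
      have := hr (π.vert 0)
      simp only [Path.wsum, Finset.range_zero, Finset.sum_empty]
      refine ⟨by simp, by simp, ?_⟩
      push_cast
      linarith [(Nat.cast_le (α := ℤ)).2 this]
    | succ k ih =>
      obtain ⟨hX, h1, h2⟩ := ih
      have hpos : 0 < f (π.vert k) := by linarith [hsum k hX]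
      refine ⟨fun i hi => ?_, ?_⟩
      · rcases Nat.lt_succ_iff_lt_or_eq.1 hi with hi | rfl
        · exact hX i hi
        · intro hmem
          rw [hf, G.supApprox_of_mem hmem] at hpos
          exact hpos.false
      · rw [π.wsum_succ]
        have hr' := (Nat.cast_le (α := ℤ)).2 (hr (π.vert (k + 1)))
        push_cast
        rcases hstep' k hpos with h | ⟨h, hlt⟩
        · exact ⟨by linarith, by nlinarith⟩
        · have hlt' : (r (π.vert (k + 1)) : ℤ) + 1 ≤ r (π.vert k) := by exact_mod_cast hlt
          exact ⟨by linarith, by nlinarith⟩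
  obtain ⟨M, hM⟩ := (Set.finite_range f).bddAbove
  have hM' (v : V) : f v ≤ M := hM ⟨v, rfl⟩
  obtain ⟨hX, -, h⟩ := hinv (N + (N + 1) * (M.toNat + 1))
  have h1 := hsum _ hX
  have h2 := hM' (π.vert (N + (N + 1) * (M.toNat + 1)))
  have h3 := Int.self_le_toNat M
  push_cast at h
  nlinarith

theorem exists_strategy_supSigma_le (X : Set V) :
    ∃ σ, G.Legal σ ∧ ∀ π : G.Path, π.ConsMin σ → ∀ C : ℤ,
      (∀ N, G.supApprox X N (π.vert 0) ≤ C) → supSigma X π ≤ ((C : ℝ) : EReal) := by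
  have hσ (v : V) : ∃ u, G.E v u ∧ (v ∉ X → G.IsMin v → ∀ C : ℤ,
      (∀ N, G.supApprox X N v ≤ C) → ∀ N, G.w v u + G.supApprox X N u ≤ C) := by
    by_cases h : v ∉ X ∧ G.IsMin v
    · by_contra! hcon
      have hev (u : V) : ∀ᶠ N in Filter.atTop,
          ¬ (G.E v u ∧ G.w v u + G.supApprox X N u ≤ G.supApprox X (N + 1) v) := by
        by_cases hu : G.E v u
        · obtain ⟨-, -, C, hC, N, hN⟩ := hcon u hu
          filter_upwards [Filter.eventually_ge_atTop N] with N' hN' hle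
          have hmono : G.supApprox X N u ≤ G.supApprox X N' u := G.supApprox_mono u hN'
          linarith [hle.2, hC (N' + 1)]
        · simp [hu]
      obtain ⟨N, hN⟩ := (Filter.eventually_all.2 hev).exists
      obtain ⟨u, hu⟩ := G.exists_add_supApprox_le h.1 h.2 N
      exact hN u hu
    · obtain ⟨u, hu⟩ := G.sinkless v
      exact ⟨u, hu, fun h1 h2 => absurd ⟨h1, h2⟩ h⟩
  choose σ hlegal hσ using hσ
  refine ⟨σ, hlegal, fun π hπ C hC => iSup_le fun ⟨k, hk⟩ => ?_⟩
  have hinv : ∀ N, π.wsum k + G.supApprox X N (π.vert k) ≤ C := by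
    induction k with
    | zero => simpa [Path.wsum] using hC
    | succ k ih =>
      have ih := ih fun i hi => hk i (hi.trans k.lt_succ_self)
      have hkX := hk k k.lt_succ_self
      intro N
      rw [π.wsum_succ]
      by_cases hv : G.IsMin (π.vert k)
      · rw [hπ k hv]
        linarith [hσ _ hkX hv (C - π.wsum k) (fun N => by linarith [ih N]) N]
      · linarith [ih (N + 1), G.add_supApprox_le hkX hv (π.adj k) N]
  have : π.wsum k ≤ C := by linarith [hinv 0, G.supApprox_nonneg (X := X) 0 (π.vert k)]
  exact_mod_cast this

end supApprox

theorem minVal_supSigma_eq_maxVal [Finite V] (G : MPGame V) (X : Set V) (v : V) :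
    G.minVal (supSigma X) v = G.maxVal (supSigma X) v := by
  refine le_antisymm ?_ (G.maxVal_le_minVal _ v)
  have hmax (N : ℕ) : (((G.supApprox X N v : ℤ) : ℝ) : EReal) ≤ G.maxVal (supSigma X) v := by
    obtain ⟨τ, hτ, h⟩ := G.exists_strategy_supApprox_le_supSigma X N
    refine le_iSup_of_le ⟨τ, hτ⟩ (le_iInf fun ⟨π, h0, hπ⟩ => ?_)
    exact h0 ▸ h π hπ
  induction hr : G.maxVal (supSigma X) v with
  | bot => simpa [hr] using hmax 0
  | top => exact le_top
  | coe r =>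
    obtain ⟨σ, hσ, h⟩ := G.exists_strategy_supSigma_le X
    refine iInf_le_of_le ⟨σ, hσ⟩ (iSup_le fun ⟨π, h0, hπ⟩ => ?_)
    refine (h π hπ ⌊r⌋ fun N => ?_).trans (by exact_mod_cast Int.floor_le r)
    rw [h0, Int.le_floor]
    exact_mod_cast hr ▸ hmax N

/-- The game with the weights negated and the two players exchanged. -/
def dual (G : MPGame V) : MPGame V where
  E := G.E
  w := fun u v => -G.w u v
  IsMin := fun v => ¬ G.IsMin v
  sinkless := G.sinkless

theorem supSigma_dual (G : MPGame V) (X : Set V) (π : G.Path) :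
    supSigma (G := G.dual) X ⟨π.vert, π.adj⟩ = -infSigma X π := by
  have hw (k : ℕ) : Path.wsum (G := G.dual) ⟨π.vert, π.adj⟩ k = -π.wsum k := by
    simp [Path.wsum, dual]
  simp only [supSigma, infSigma, hw]
  apply le_antisymm
  · refine iSup_le fun k => ?_
    rw [EReal.le_neg]
    exact (iInf_le _ k).trans (by simp)
  · rw [EReal.neg_le]
    refine le_iInf fun k => ?_
    rw [EReal.neg_le]
    refine le_trans (by simp) (le_iSup _ k)

theorem minVal_infSigma_eq_maxVal [Finite V] (G : MPGame V) (X : Set V) (v : V) :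
    G.minVal (infSigma X) v = G.maxVal (infSigma X) v := by
  refine le_antisymm ?_ (G.maxVal_le_minVal _ v)
  have h1 : -G.maxVal (infSigma X) v ≤ G.dual.minVal (supSigma X) v := by
    refine le_iInf fun ⟨σ, hσ⟩ => ?_
    rw [EReal.neg_le]
    refine le_iSup_of_le ⟨σ, hσ⟩ (le_iInf fun ⟨π, h0, hπ⟩ => ?_)
    rw [EReal.neg_le, ← supSigma_dual]
    exact le_iSup (fun π : {π : G.dual.Path // π.vert 0 = v ∧ π.ConsMin σ} => supSigma X π.1)
      ⟨⟨π.vert, π.adj⟩, h0, hπ⟩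
  have h2 : G.dual.maxVal (supSigma X) v ≤ -G.minVal (infSigma X) v := by
    refine iSup_le fun ⟨τ, hτ⟩ => ?_
    rw [EReal.le_neg]
    refine iInf_le_of_le ⟨τ, hτ⟩ (iSup_le fun ⟨π, h0, hπ⟩ => ?_)
    rw [EReal.le_neg, ← supSigma_dual]
    exact iInf_le (fun π : {π : G.dual.Path // π.vert 0 = v ∧ π.ConsMax τ} => supSigma X π.1)
      ⟨⟨π.vert, π.adj⟩, h0, fun i hi => hπ i (not_not.1 hi)⟩
  rw [← minVal_supSigma_eq_maxVal] at h2
  exact EReal.neg_le_neg_iff.1 (h1.trans h2)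

/-- The game with weights `q * w - p`, in which mean payoffs are compared with `p / q`. -/
def affine (G : MPGame V) (p q : ℤ) : MPGame V where
  E := G.E
  w := fun u v => q * G.w u v - p
  IsMin := G.IsMin
  sinkless := G.sinkless

theorem Path.wsum_affine {G : MPGame V} (π : G.Path) (p q : ℤ) (k : ℕ) :
    Path.wsum (G := G.affine p q) ⟨π.vert, π.adj⟩ k = q * π.wsum k - p * k := by
  simp [Path.wsum, affine, Finset.mul_sum, mul_comm]

theorem MP_le_of_supSigma_affine_ne_top {G : MPGame V} (π : G.Path) (t : ℚ)
    (h : supSigma (G := G.affine t.num t.den) ∅ ⟨π.vert, π.adj⟩ ≠ ⊤) :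
    MP π ≤ ((t : ℝ) : EReal) := by
  obtain ⟨B, hB⟩ : ∃ B : ℝ, ∀ k, (t.den : ℝ) * π.wsum k - t.num * k ≤ B := by
    refine ⟨(supSigma (G := G.affine t.num t.den) ∅ ⟨π.vert, π.adj⟩).toReal, fun k => ?_⟩
    have hk := le_iSup (fun k : {k : ℕ // ∀ i < k, π.vert i ∉ (∅ : Set V)} =>
      ((Path.wsum (G := G.affine t.num t.den) ⟨π.vert, π.adj⟩ k.1 : ℝ) : EReal))
      ⟨k, by simp⟩
    have hreal := EReal.toReal_le_toReal hk (EReal.coe_ne_bot _) h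
    rw [EReal.toReal_coe, π.wsum_affine] at hreal
    push_cast at hreal
    exact hreal
  have hden : (0 : ℝ) < t.den := by exact_mod_cast t.pos
  have ht : (t : ℝ) * t.den = t.num := by exact_mod_cast t.mul_den_eq_num
  have hlim : Filter.Tendsto (fun k : ℕ => (((t : ℝ) + B / t.den / k : ℝ) : EReal)) Filter.atTop
      (nhds ((t : ℝ) : EReal)) := by
    refine (continuous_coe_real_ereal.tendsto _).comp ?_
    simpa using (tendsto_const_div_atTop_nhds_zero_nat (B / t.den)).const_add (t : ℝ)
  rw [MP, ← hlim.limsup_eq]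
  refine Filter.limsup_le_limsup ?_
  filter_upwards [Filter.eventually_gt_atTop 0] with k hk
  have hk' : (0 : ℝ) < k := by exact_mod_cast hk
  rw [← EReal.coe_div, EReal.coe_le_coe_iff, div_le_iff₀ hk', add_mul, div_mul_cancel₀ _ hk'.ne',
    ← sub_le_iff_le_add', le_div_iff₀ hden]
  nlinarith [hB k]

theorem le_MP_of_supSigma_affine_eq_top {G : MPGame V} (π : G.Path) (t : ℚ)
    (h : supSigma (G := G.affine t.num t.den) ∅ ⟨π.vert, π.adj⟩ = ⊤) :
    ((t : ℝ) : EReal) ≤ MP π := by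
  by_contra! hlt
  have hden : (0 : ℝ) < t.den := by exact_mod_cast t.pos
  have ht : (t : ℝ) * t.den = t.num := by exact_mod_cast t.mul_den_eq_num
  have hev : ∀ᶠ k : ℕ in Filter.atTop, (t.den : ℝ) * π.wsum k - t.num * k ≤ 0 := by
    filter_upwards [Filter.eventually_lt_of_limsup_lt hlt, Filter.eventually_gt_atTop 0]
      with k hk hk0
    have hk' : (0 : ℝ) < k := by exact_mod_cast hk0
    rw [← EReal.coe_div, EReal.coe_lt_coe_iff, div_lt_iff₀ hk'] at hk
    rw [← ht]
    nlinarith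
  obtain ⟨B, hB⟩ : BddAbove (Set.range fun k : ℕ => (t.den : ℝ) * π.wsum k - t.num * k) :=
    Filter.IsBoundedUnder.bddAbove_range ⟨0, by simpa using hev⟩
  refine (EReal.coe_lt_top B).not_ge (h ▸ iSup_le fun k => ?_)
  rw [π.wsum_affine]
  have := hB ⟨k.1, rfl⟩
  push_cast
  exact_mod_cast this

theorem minVal_MP_eq_maxVal [Finite V] (G : MPGame V) (v : V) :
    G.minVal MP v = G.maxVal MP v := by
  refine le_antisymm ?_ (G.maxVal_le_minVal _ v)
  by_contra! hlt
  obtain ⟨t, ht1, ht2⟩ := EReal.lt_iff_exists_rat_btwn.1 hlt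
  have hdet := (G.affine t.num t.den).minVal_supSigma_eq_maxVal ∅ v
  by_cases htop : (G.affine t.num t.den).maxVal (supSigma ∅) v = ⊤
  · refine ht1.not_ge ?_
    obtain ⟨⟨τ, hτ⟩, h⟩ := exists_eq_ciSup_of_finite
      (f := fun τ : {τ : V → V // (G.affine t.num t.den).Legal τ} =>
        ⨅ π : {π : (G.affine t.num t.den).Path // π.vert 0 = v ∧ π.ConsMax τ.1},
          supSigma ∅ π.1)
    have h := iInf_eq_top.1 (h.trans htop)
    exact le_iSup_of_le ⟨τ, hτ⟩ (le_iInf fun ⟨π, h0, hπ⟩ =>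
      le_MP_of_supSigma_affine_eq_top π t (h ⟨⟨π.vert, π.adj⟩, h0, hπ⟩))
  · refine ht2.not_ge ?_
    rw [← hdet] at htop
    obtain ⟨⟨σ, hσ⟩, h⟩ := exists_eq_ciInf_of_finite
      (f := fun σ : {σ : V → V // (G.affine t.num t.den).Legal σ} =>
        ⨆ π : {π : (G.affine t.num t.den).Path // π.vert 0 = v ∧ π.ConsMin σ.1},
          supSigma ∅ π.1)
    refine iInf_le_of_le ⟨σ, hσ⟩ (iSup_le fun ⟨π, h0, hπ⟩ =>
      MP_le_of_supSigma_affine_ne_top π t fun hπtop => htop (h.symm.trans (top_le_iff.1 ?_)))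
    rw [← hπtop]
    exact le_iSup (fun π : {π : (G.affine t.num t.den).Path // π.vert 0 = v ∧ π.ConsMin σ} =>
      supSigma ∅ π.1) ⟨⟨π.vert, π.adj⟩, h0, hπ⟩

end MPGame

open MPGame in
/-- positional determinacy: for any finite game `G`, any
subset `X` of vertices, any valuation `val ∈ {MP, supΣ^X, infΣ^X}` and any
vertex `v`, the inf over positional Min-strategies of the sup over consistent
paths from `v` equals the sup over positional Max-strategies of the inf over
consistent paths from `v`. -/
theorem statement0 {V : Type*} [Fintype V] (G : MPGame V) (X : Set V)
    (val : G.Path → EReal)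
    (hval : val = MPGame.MP ∨ val = MPGame.supSigma X ∨ val = MPGame.infSigma X)
    (v : V) :
    G.minVal val v = G.maxVal val v := by
  rcases hval with rfl | rfl | rfl
  · exact G.minVal_MP_eq_maxVal v
  · exact G.minVal_supSigma_eq_maxVal X v
  · exact G.minVal_infSigma_eq_maxVal X v
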